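/- Let K ⊆ {z ∈ ℂ : Re(z) ≤ 0} be a nonempty compact convex set such that the intersection K ∩ iℝ of K with the imaginary axis is a singleton. Then no function f ∈ Exp(K) is frequently hypercyclic for T₁ on H(ℂ). -/

import Mathlib

open Filter Complex

/-- Support function `H_K(z) = sup { Re (z·u) : u ∈ K }` of a set `K ⊆ ℂ`. -/
noncomputable def suppFn (K : Set ℂ) (z : ℂ) : ℝ :=
  sSup ((fun u => (z * u).re) '' K)

/-- The norm `‖f‖_{K,n} = sup_z |f z| · exp (−H_K z − |z|/n)`. -/
noncomputable def expNorm (K : Set ℂ) (n : ℕ) (f : ℂ → ℂ) : ℝ :=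
  sSup (Set.range fun z : ℂ => ‖f z‖ * Real.exp (-(suppFn K z) - ‖z‖ / n))

/-- Membership in `Exp(K)`: `f` is entire and all the norms `‖f‖_{K,n}` are finite. -/
def MemExp (K : Set ℂ) (f : ℂ → ℂ) : Prop :=
  Differentiable ℂ f ∧ ∀ n : ℕ, 0 < n →
    BddAbove (Set.range fun z : ℂ => ‖f z‖ * Real.exp (-(suppFn K z) - ‖z‖ / n))

open scoped Classical in
/-- Lower density of a set of natural numbers. -/
noncomputable def lowerDensity (A : Set ℕ) : ℝ :=
  liminf (fun N : ℕ =>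
    (((Finset.range (N + 1)).filter (fun n => n ∈ A)).card : ℝ) / N) atTop

/-- Lower density of a discrete subset of `ℂ`. -/
noncomputable def ldensC (Λ : Set ℂ) : ℝ :=
  liminf (fun r : ℝ => (Nat.card {z : ℂ // z ∈ Λ ∧ ‖z‖ ≤ r} : ℝ) / r) atTop

/-- `f` is hypercyclic for the translation `T₁` on `Exp(K)`. -/
def HCExp (K : Set ℂ) (f : ℂ → ℂ) : Prop :=
  MemExp K f ∧ ∀ g : ℂ → ℂ, MemExp K g → ∀ n : ℕ, 0 < n → ∀ ε > (0 : ℝ),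
    ∃ k : ℕ, expNorm K n (fun z => f (z + (k : ℂ)) - g z) < ε

/-- `f` is frequently hypercyclic for the translation `T₁` on `Exp(K)`. -/
def FHCExp (K : Set ℂ) (f : ℂ → ℂ) : Prop :=
  MemExp K f ∧ ∀ g : ℂ → ℂ, MemExp K g → ∀ n : ℕ, 0 < n → ∀ ε > (0 : ℝ),
    0 < lowerDensity {k : ℕ | expNorm K n (fun z => f (z + (k : ℂ)) - g z) < ε}

/-- `f` is hypercyclic (Birkhoff-universal) for `T₁` on `H(ℂ)`. -/
def HCEnt (f : ℂ → ℂ) : Prop :=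
  Differentiable ℂ f ∧ ∀ g : ℂ → ℂ, Differentiable ℂ g → ∀ R > (0 : ℝ), ∀ ε > (0 : ℝ),
    ∃ k : ℕ, ∀ z : ℂ, ‖z‖ ≤ R → ‖f (z + (k : ℂ)) - g z‖ < ε

/-- `f` is frequently hypercyclic (frequently Birkhoff-universal) for `T₁` on `H(ℂ)`. -/
def FHCEnt (f : ℂ → ℂ) : Prop :=
  Differentiable ℂ f ∧ ∀ g : ℂ → ℂ, Differentiable ℂ g → ∀ R > (0 : ℝ), ∀ ε > (0 : ℝ),
    0 < lowerDensity {k : ℕ | ∀ z : ℂ, ‖z‖ ≤ R → ‖f (z + (k : ℂ)) - g z‖ < ε}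

/-- `f` is an entire function of (finite) exponential type. -/
def ExpType (f : ℂ → ℂ) : Prop :=
  Differentiable ℂ f ∧ ∃ C τ : ℝ, ∀ z : ℂ, ‖f z‖ ≤ C * Real.exp (τ * ‖z‖)

/-- The indicator function `h_f(θ) = limsup_{r→∞} log |f(r e^{iθ})| / r`. -/
noncomputable def indicatorFn (f : ℂ → ℂ) (θ : ℝ) : ℝ :=
  limsup (fun r : ℝ => Real.log ‖f ((r : ℂ) * Complex.exp (θ * Complex.I))‖ / r) atTop

/-- Divide out finitely many zeros of an entire function. -/
lemma aux_factor (Z : Finset ℂ) : ∀ F : ℂ → ℂ, Differentiable ℂ F → (∀ w ∈ Z, F w = 0) →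
    ∃ h : ℂ → ℂ, Differentiable ℂ h ∧ ∀ z, F z = (∏ w ∈ Z, (z - w)) * h z := by
  classical
  induction Z using Finset.induction_on with
  | empty => intro F hF _; exact ⟨F, hF, by simp⟩
  | insert a Z ha ih =>
    intro F hF hz
    have hFa : F a = 0 := hz a (Finset.mem_insert_self _ _)
    have hd : Differentiable ℂ (dslope F a) := by
      rw [← differentiableOn_univ] at hF ⊢
      exact (Complex.differentiableOn_dslope Filter.univ_mem).2 hF
    have hfac : ∀ z, F z = (z - a) * dslope F a z := by
      intro z
      have := sub_smul_dslope F a z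
      rw [hFa, sub_zero, smul_eq_mul] at this
      exact this.symm
    obtain ⟨h, hh, hh'⟩ := ih (dslope F a) hd (by
      intro w hw
      have h1 := hfac w
      rw [hz w (Finset.mem_insert_of_mem hw)] at h1
      have h2 : w - a ≠ 0 := by
        rw [sub_ne_zero]; rintro rfl; exact ha hw
      rcases mul_eq_zero.1 h1.symm with h3 | h3
      · exact absurd h3 h2
      · exact h3)
    refine ⟨h, hh, fun z => ?_⟩
    rw [Finset.prod_insert ha, hfac z, hh' z, mul_assoc]

/-- Jensen-type estimate. -/
lemma aux_jensen (F : ℂ → ℂ) (hF : Differentiable ℂ F) (Z : Finset ℂ) (c : ℂ) (ρ M : ℝ)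
    (hρ : 0 < ρ) (hZ : ∀ w ∈ Z, F w = 0) (hZc : ∀ w ∈ Z, ‖w - c‖ ≤ ρ)
    (hM : ∀ z, ‖z - c‖ = 3 * ρ → ‖F z‖ ≤ M) : ‖F c‖ * 2 ^ Z.card ≤ M := by
  obtain ⟨h, hh, hfac⟩ := aux_factor Z F hF hZ
  have key : ‖h c‖ ≤ M / (2 * ρ) ^ Z.card := by
    refine Complex.norm_le_of_forall_mem_frontier_norm_le (U := Metric.ball c (3 * ρ))
      Metric.isBounded_ball hh.diffContOnCl ?_ (subset_closure (Metric.mem_ball_self (by linarith)))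
    intro z hz
    rw [frontier_ball c (by positivity), mem_sphere_iff_norm] at hz
    rw [le_div_iff₀ (by positivity), mul_comm]
    refine le_trans ?_ (hM z hz)
    rw [hfac z, norm_mul, norm_prod]
    refine mul_le_mul_of_nonneg_right ?_ (norm_nonneg _)
    rw [← Finset.prod_const]
    refine Finset.prod_le_prod (fun _ _ => by positivity) fun w hw => ?_
    have h1 := hZc w hw
    have h2 := norm_sub_norm_le (z - c) (w - c)
    have h3 : z - c - (w - c) = z - w := by ring
    rw [h3] at h2
    linarith
  rw [le_div_iff₀ (by positivity), mul_pow] at key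
  refine le_trans ?_ key
  rw [hfac c, norm_mul, norm_prod]
  have : ∏ w ∈ Z, ‖c - w‖ ≤ ρ ^ Z.card := by
    rw [← Finset.prod_const]
    refine Finset.prod_le_prod (fun _ _ => by positivity) fun w hw => ?_
    rw [norm_sub_rev]; exact hZc w hw
  have h2 : 0 ≤ ‖h c‖ * 2 ^ Z.card := by positivity
  nlinarith [mul_le_mul_of_nonneg_right this h2]

lemma aux_supp (K : Set ℂ) (hKc : IsCompact K)
    (hK : K ⊆ {z : ℂ | z.re ≤ 0}) (z₀ : ℂ) (hz₀ : K ∩ {z : ℂ | z.re = 0} = {z₀})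
    (η : ℝ) (hη : 0 < η) : ∃ s > 0, ∀ z : ℂ, 0 < z.re → |z.im| ≤ s * z.re →
      ∀ u ∈ K, (z * u).re ≤ η * |z.im| + (z * z₀).re := by
  have hz0 : z₀ ∈ K ∩ {z : ℂ | z.re = 0} := by rw [hz₀]; rfl
  have hz0r : z₀.re = 0 := hz0.2
  have hα : ∃ α > 0, ∀ u ∈ K, η ≤ |u.im - z₀.im| → u.re ≤ -α := by
    have hc : IsCompact (K ∩ {u : ℂ | η ≤ |u.im - z₀.im|}) := by
      apply hKc.inter_right
      exact isClosed_le continuous_const (by fun_prop)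
    rcases Set.eq_empty_or_nonempty (K ∩ {u : ℂ | η ≤ |u.im - z₀.im|}) with he | hn
    · refine ⟨1, one_pos, fun u hu h => ?_⟩
      have : u ∈ K ∩ {u : ℂ | η ≤ |u.im - z₀.im|} := ⟨hu, h⟩
      rw [he] at this; exact this.elim
    · obtain ⟨m, hm, hmax⟩ := hc.exists_isMaxOn hn Complex.continuous_re.continuousOn
      have h1 : m.re ≤ 0 := hK hm.1
      have h2 : m.re ≠ 0 := by
        intro h
        have : m ∈ K ∩ {z : ℂ | z.re = 0} := ⟨hm.1, h⟩
        rw [hz₀, Set.mem_singleton_iff] at this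
        have h3 := hm.2
        rw [this] at h3
        simp at h3
        linarith
      refine ⟨-m.re, by have := lt_of_le_of_ne h1 h2; linarith, fun u hu h => ?_⟩
      have := hmax (show u ∈ K ∩ {u : ℂ | η ≤ |u.im - z₀.im|} from ⟨hu, h⟩)
      simp at this ⊢
      exact this
  obtain ⟨α, hα0, hα⟩ := hα
  obtain ⟨B, hB⟩ := hKc.isBounded.exists_norm_le
  have hB0 : 0 ≤ B := (norm_nonneg _).trans (hB _ hz0.1)
  refine ⟨α / (2 * B + 1), by positivity, fun z hz hzi u hu => ?_⟩
  have hre : u.re ≤ 0 := hK hu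
  rw [Complex.mul_re, Complex.mul_re, hz0r]
  have e1 : -(z.im * (u.im - z₀.im)) ≤ |z.im| * |u.im - z₀.im| := by
    rw [← abs_mul]; exact neg_le_abs _
  rcases le_total η |u.im - z₀.im| with h | h
  · have h1 := hα u hu h
    have h2 : |u.im - z₀.im| ≤ 2 * B + 1 := by
      have a1 := (Complex.abs_im_le_norm u).trans (hB u hu)
      have a2 := (Complex.abs_im_le_norm z₀).trans (hB z₀ hz0.1)
      have a3 := abs_sub u.im z₀.im
      linarith
    have h3 : |z.im| * |u.im - z₀.im| ≤ α * z.re := by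
      calc |z.im| * |u.im - z₀.im| ≤ (α / (2 * B + 1) * z.re) * (2 * B + 1) := by gcongr
        _ = α * z.re := by field_simp
    have h4 : 0 ≤ η * |z.im| := by positivity
    nlinarith
  · have h3 := mul_le_mul_of_nonneg_left h (abs_nonneg z.im)
    have h4 := mul_nonneg hz.le (neg_nonneg.2 hre)
    nlinarith

/-- A perturbation of the identity has a zero. -/
lemma aux_zero (F : ℂ → ℂ) (hF : Differentiable ℂ F)
    (h : ∀ z : ℂ, ‖z‖ ≤ 1 → ‖F z - z‖ < 1 / 100) : ∃ w, ‖w‖ ≤ 1 / 4 ∧ F w = 0 := by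
  by_contra! hcon
  have hcl : closure (Metric.ball (0 : ℂ) (1 / 4)) = Metric.closedBall 0 (1 / 4) :=
    closure_ball _ (by norm_num)
  have key : ‖(F 0)⁻¹‖ ≤ 5 := by
    refine Complex.norm_le_of_forall_mem_frontier_norm_le (U := Metric.ball (0 : ℂ) (1 / 4))
      (f := fun z => (F z)⁻¹)
      Metric.isBounded_ball ?_ ?_ (subset_closure (Metric.mem_ball_self (by norm_num)))
    · refine hF.diffContOnCl.inv fun z hz => ?_
      rw [hcl] at hz
      exact hcon z (by simpa using hz)
    · intro z hz
      rw [frontier_ball _ (by norm_num), mem_sphere_zero_iff_norm] at hz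
      rw [norm_inv]
      have h1 := h z (by rw [hz]; norm_num)
      have h2 := norm_sub_norm_le z (F z)
      rw [norm_sub_rev] at h2
      rw [inv_le_comm₀ (by linarith) (by norm_num)]
      linarith
  have h0 := h 0 (by simp)
  rw [sub_zero] at h0
  have hp : 0 < ‖F 0‖ := norm_pos_iff.2 (hcon 0 (by simp))
  rw [norm_inv, inv_le_comm₀ hp (by norm_num)] at key
  linarith

lemma aux_density (A : Set ℕ) (hA : 0 < lowerDensity A) :
    ∃ δ : ℝ, 0 < δ ∧ ∃ N₀ : ℕ, ∀ N ≥ N₀, ∃ S : Finset ℕ, (∀ k ∈ S, k ∈ A ∧ k ≤ N) ∧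
      δ * N ≤ S.card := by
  classical
  refine ⟨lowerDensity A / 2, by linarith, ?_⟩
  have h1 : lowerDensity A / 2 < lowerDensity A := by linarith
  have h2 := Filter.eventually_lt_of_lt_liminf (b := lowerDensity A / 2) h1
    (isBoundedUnder_of ⟨0, fun N => by positivity⟩)
  obtain ⟨N₀, hN₀⟩ := eventually_atTop.1 h2
  refine ⟨N₀ + 1, fun N hN => ⟨_, ?_, ((lt_div_iff₀ ?_).1 (hN₀ N (by omega))).le⟩⟩
  · intro k hk
    rw [Finset.mem_filter, Finset.mem_range] at hk
    exact ⟨hk.2, by omega⟩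
  · exact_mod_cast (by omega : 0 < N)

/-- Many elements of a set of positive lower density lie in a short interval. -/
lemma aux_pigeon (S : Finset ℕ) (J L : ℕ) (hJ : 1 ≤ J) (hL : 1 ≤ L) (δ : ℝ) (hδ : 0 < δ)
    (hS : ∀ k ∈ S, k ≤ J * L) (hc : δ * (J * L : ℕ) ≤ S.card) (hbig : 6 ≤ δ * L) :
    ∃ T ⊆ S, (∀ k ∈ T, ∀ l ∈ T, (k : ℝ) ≤ l + L) ∧ (∀ k ∈ T, δ * (J * L) / 2 ≤ k) ∧
      δ * L / 6 ≤ T.card := by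
  classical
  set S' := S.filter (fun k : ℕ => δ * (J * L) / 2 ≤ (k : ℝ)) with hS'
  have hJr : (1 : ℝ) ≤ J := by exact_mod_cast hJ
  have hLr : (1 : ℝ) ≤ L := by exact_mod_cast hL
  have hcard : δ * (J * L) / 3 ≤ (S'.card : ℝ) := by
    have h1 : S'.card + (S.filter (fun k : ℕ => ¬ δ * (J * L) / 2 ≤ (k : ℝ))).card = S.card := by
      rw [hS']
      convert Finset.card_filter_add_card_filter_not (s := S)
        (fun k : ℕ => δ * (J * L) / 2 ≤ (k : ℝ))
    have h2 : S.filter (fun k : ℕ => ¬ δ * (J * L) / 2 ≤ (k : ℝ)) ⊆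
        Finset.range (⌊δ * (J * L) / 2⌋₊ + 1) := by
      intro k hk
      rw [Finset.mem_filter, not_le] at hk
      rw [Finset.mem_range]
      exact Nat.lt_succ_of_le (Nat.le_floor hk.2.le)
    have h3 := Finset.card_le_card h2
    rw [Finset.card_range] at h3
    have h4 : ((⌊δ * (J * L) / 2⌋₊ : ℕ) : ℝ) ≤ δ * (J * L) / 2 := Nat.floor_le (by positivity)
    have h5 : (S.card : ℝ) ≤ S'.card + (⌊δ * (J * L) / 2⌋₊ + 1) := by
      exact_mod_cast (by omega : S.card ≤ S'.card + (⌊δ * (J * L) / 2⌋₊ + 1))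
    push_cast at hc
    have h6 : 6 ≤ δ * (J * L) := by nlinarith
    linarith
  obtain ⟨y, -, hy⟩ := Finset.exists_le_card_fiber_of_nsmul_le_card_of_maps_to
    (s := S') (t := Finset.range (J + 1)) (f := fun k => k / L) (b := δ * L / 6) (by
      intro k hk
      rw [Finset.mem_range]
      have := hS k (Finset.mem_filter.1 hk).1
      exact Nat.lt_succ_of_le (Nat.div_le_of_le_mul (by rwa [mul_comm])))
    ⟨0, by simp⟩ (by
      rw [Finset.card_range, nsmul_eq_mul]
      push_cast
      have : 0 < δ * L := by positivity
      nlinarith)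
  refine ⟨_, (Finset.filter_subset _ _).trans (Finset.filter_subset _ _), ?_, ?_, hy⟩
  · intro k hk l hl
    have h1 := (Finset.mem_filter.1 hk).2
    have h2 := (Finset.mem_filter.1 hl).2
    have h3 := Nat.div_add_mod k L
    have h4 := Nat.div_add_mod l L
    have h5 := Nat.mod_lt k hL
    rw [h1] at h3
    rw [h2] at h4
    exact_mod_cast (by omega : k ≤ l + L)
  · intro k hk
    exact (Finset.mem_filter.1 (Finset.mem_filter.1 hk).1).2

set_option maxHeartbeats 2000000 in
/-- **Theorem 7.** If `K` is a compact convex subset of the closed left half-plane whose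
intersection with the imaginary axis is a singleton, then no function of `Exp(K)` is
frequently hypercyclic for `T₁` on `H(ℂ)`. -/
theorem stmt5 (K : Set ℂ) (hne : K.Nonempty) (hKc : IsCompact K) (hKconv : Convex ℝ K)
    (hK : K ⊆ {z : ℂ | z.re ≤ 0})
    (hsing : ∃ z₀ : ℂ, K ∩ {z : ℂ | z.re = 0} = {z₀})
    (f : ℂ → ℂ) (hf : MemExp K f) : ¬ FHCEnt f := by
  rintro ⟨hfd, hfh⟩
  obtain ⟨z₀, hz₀⟩ := hsing
  have hz0 : z₀ ∈ K ∩ {z : ℂ | z.re = 0} := by rw [hz₀]; rfl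
  have hz0r : z₀.re = 0 := hz0.2
  obtain ⟨δ, hδ, N₀, hN₀⟩ := aux_density _
    (hfh (fun z => z) differentiable_id 1 one_pos (1 / 100) (by norm_num))
  set A : Set ℕ := {k : ℕ | ∀ z : ℂ, ‖z‖ ≤ 1 → ‖f (z + (k : ℂ)) - z‖ < 1 / 100} with hA
  obtain ⟨s, hs, hsupp⟩ := aux_supp K hKc hK z₀ hz₀ (δ / 100) (by positivity)
  obtain ⟨J, hJ⟩ := exists_nat_ge (24 / δ + 24 / (s * δ) + 1)
  have hJ1 : (1 : ℝ) ≤ J := by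
    have : 0 ≤ 24 / δ + 24 / (s * δ) := by positivity
    linarith
  have hJδ : 24 ≤ δ * J := by
    have : 24 / δ ≤ J := by
      have : 0 ≤ 24 / (s * δ) := by positivity
      linarith
    rw [div_le_iff₀ hδ] at this; linarith
  have hJs : 24 ≤ s * δ * J := by
    have : 24 / (s * δ) ≤ J := by
      have : 0 ≤ 24 / δ := by positivity
      linarith
    rw [div_le_iff₀ (by positivity)] at this; linarith
  obtain ⟨n, hn⟩ := exists_nat_ge (800 * J / δ)
  have hn0 : (0 : ℝ) < n := lt_of_lt_of_le (by positivity) hn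
  have hnJ : 800 * J ≤ n * δ := by rwa [div_le_iff₀ hδ] at hn
  obtain ⟨C, hC⟩ := hf.2 n (by exact_mod_cast hn0)
  have hC' : ∀ z : ℂ, ‖f z‖ ≤ C * Real.exp (suppFn K z + ‖z‖ / n) := by
    intro z
    have h1 := hC ⟨z, rfl⟩
    simp only at h1
    have h2 : -(suppFn K z) - ‖z‖ / n = -(suppFn K z + ‖z‖ / n) := by ring
    rw [h2, Real.exp_neg, ← div_eq_mul_inv, div_le_iff₀ (Real.exp_pos _)] at h1
    exact h1
  have hC0 : 0 ≤ C := by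
    have h1 := (norm_nonneg _).trans (hC' 0)
    exact nonneg_of_mul_nonneg_left h1 (Real.exp_pos _)
  set F : ℂ → ℂ := fun z => f z * Complex.exp (-(z * z₀)) with hFdef
  have hFd : Differentiable ℂ F := by
    apply hfd.mul
    fun_prop
  have hFb : ∀ z : ℂ, 0 < z.re → |z.im| ≤ s * z.re →
      ‖F z‖ ≤ C * Real.exp (δ / 100 * |z.im| + ‖z‖ / n) := by
    intro z h1 h2
    have h3 : suppFn K z ≤ δ / 100 * |z.im| + (z * z₀).re := by
      apply csSup_le (hne.image _)
      rintro _ ⟨u, hu, rfl⟩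
      exact hsupp z h1 h2 u hu
    rw [hFdef]
    simp only
    rw [norm_mul, Complex.norm_exp]
    calc ‖f z‖ * Real.exp (-(z * z₀)).re
        ≤ C * Real.exp (suppFn K z + ‖z‖ / n) * Real.exp (-(z * z₀)).re := by
          gcongr; exact hC' z
      _ = C * Real.exp (suppFn K z + ‖z‖ / n - (z * z₀).re) := by
          rw [mul_assoc, ← Real.exp_add, Complex.neg_re, sub_eq_add_neg]
      _ ≤ _ := by
          gcongr; linarith
  -- zeros
  have hzero : ∀ k : ℕ, k ∈ A → ∃ w : ℂ, ‖w - k‖ ≤ 1 / 4 ∧ F w = 0 := by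
    intro k hk
    obtain ⟨w, hw, hw0⟩ := aux_zero (fun z => f (z + k)) (by fun_prop) hk
    refine ⟨w + k, by simpa using hw, ?_⟩
    simp [hFdef, hw0]
  choose! ζ hζ hζ0 using hzero
  have hζinj : Set.InjOn ζ A := by
    intro k hk l hl hkl
    have h1 := hζ k hk
    have h2 := hζ l hl
    rw [← hkl] at h2
    by_contra hne
    have h3 : ‖((k : ℂ) - l)‖ ≤ 1 / 2 := by
      have : (k : ℂ) - l = (ζ k - l) - (ζ k - k) := by ring
      rw [this]
      exact (norm_sub_le _ _).trans (by linarith)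
    have h4 : (1 : ℝ) ≤ ‖((k : ℂ) - l)‖ := by
      have h5 : ((k : ℂ) - l) = (((k : ℤ) - (l : ℤ) : ℤ) : ℂ) := by push_cast; rfl
      rw [h5, Complex.norm_intCast]
      have h6 : (k : ℤ) - l ≠ 0 := by omega
      exact_mod_cast Int.one_le_abs h6
    linarith
  have hmain : ∀ᶠ L : ℕ in atTop, 0.49 ≤ C * Real.exp (-(δ / 100 * L)) := by
    have hbig : ∀ᶠ L : ℕ in atTop, 6 / δ ≤ L := tendsto_natCast_atTop_atTop.eventually_ge_atTop _
    filter_upwards [hbig, eventually_ge_atTop 1, eventually_ge_atTop N₀] with L hL6 hL1 hLN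
    have hLr : (1 : ℝ) ≤ L := by exact_mod_cast hL1
    have hJn : 1 ≤ J := by exact_mod_cast hJ1
    rw [div_le_iff₀ hδ] at hL6
    obtain ⟨S, hSA, hSc⟩ := hN₀ (J * L) (hLN.trans (Nat.le_mul_of_pos_left L hJn))
    obtain ⟨T, hTS, hTd, hTl, hTc⟩ := aux_pigeon S J L hJn hL1 δ hδ (fun k hk => (hSA k hk).2)
      hSc (by linarith)
    have hTne : T.Nonempty := by
      rw [← Finset.card_pos]
      have : (0 : ℝ) < T.card := lt_of_lt_of_le (by positivity) hTc
      exact_mod_cast this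
    obtain ⟨k, hk⟩ := hTne
    have hkA := (hSA k (hTS hk)).1
    have hkN : (k : ℝ) ≤ J * L := by exact_mod_cast (hSA k (hTS hk)).2
    have hkl := hTl k hk
    set c : ℂ := (1 / 2 : ℂ) + k with hc
    have hcre : c.re = 1 / 2 + k := by simp [hc]
    have hcim : c.im = 0 := by simp [hc]
    have hFc : 0.49 ≤ ‖F c‖ := by
      have h1 := hkA (1 / 2) (by norm_num)
      have h2 := norm_sub_norm_le (1 / 2 : ℂ) (f c)
      rw [norm_sub_rev] at h2
      have h3 : ‖(1 / 2 : ℂ)‖ = 1 / 2 := by norm_num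
      have h4 : ‖F c‖ = ‖f c‖ := by
        simp [hFdef, Complex.norm_exp, hz0r, hcim]
      rw [h4]
      rw [h3] at h2
      norm_num at h1 h2 ⊢
      norm_num [hc] at h1 h2 ⊢
      linarith
    classical
    have hcardZ : (T.image ζ).card = T.card :=
      Finset.card_image_of_injOn (hζinj.mono fun l hl => (hSA l (hTS hl)).1)
    have hJen := aux_jensen F hFd (T.image ζ) c (2 * L)
      (C * Real.exp (δ / 100 * (6 * L) + δ / 100 * L)) (by positivity)
      (by
        intro w hw
        obtain ⟨l, hl, rfl⟩ := Finset.mem_image.1 hw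
        exact hζ0 l (hSA l (hTS hl)).1)
      (by
        intro w hw
        obtain ⟨l, hl, rfl⟩ := Finset.mem_image.1 hw
        have h1 := hζ l (hSA l (hTS hl)).1
        have h2 : ‖((l : ℂ) - k)‖ ≤ L := by
          have h5 : ((l : ℂ) - k) = (((l : ℝ) - (k : ℝ) : ℝ) : ℂ) := by push_cast; rfl
          rw [h5, Complex.norm_real, Real.norm_eq_abs, abs_le]
          constructor
          · linarith [hTd k hk l hl]
          · linarith [hTd l hl k hk]
        have h3 : ζ l - c = (ζ l - l) + ((l : ℂ) - k) - 1 / 2 := by rw [hc]; ring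
        have h4 : ‖(1 / 2 : ℂ)‖ = 1 / 2 := by norm_num
        rw [h3]
        have h6 := norm_sub_le ((ζ l - l) + ((l : ℂ) - k)) (1 / 2)
        have h7 := norm_add_le (ζ l - l) ((l : ℂ) - k)
        linarith)
      (by
        intro z hz
        have him : |z.im| ≤ 6 * L := by
          have := Complex.abs_im_le_norm (z - c)
          rw [hz, Complex.sub_im, hcim, sub_zero] at this
          linarith
        have hre : δ * J * L / 4 ≤ z.re := by
          have := (abs_le.1 (Complex.abs_re_le_norm (z - c))).1
          rw [hz, Complex.sub_re, hcre] at this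
          nlinarith
        have hnz : ‖z‖ ≤ 8 * (J * L) := by
          have h1 := norm_add_le (z - c) c
          rw [sub_add_cancel, hz] at h1
          have h2 : ‖c‖ ≤ 1 / 2 + k := by
            rw [hc]
            refine (norm_add_le _ _).trans ?_
            rw [Complex.norm_natCast]
            norm_num
          nlinarith
        have hpos : 0 < z.re := lt_of_lt_of_le (by positivity) hre
        refine (hFb z hpos ?_).trans ?_
        · have h1 := mul_le_mul_of_nonneg_left hre hs.le
          nlinarith
        · have h1 : ‖z‖ / n ≤ δ / 100 * L := by
            rw [div_le_iff₀ hn0]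
            nlinarith
          gcongr)
    rw [hcardZ] at hJen
    have h2 : Real.exp (δ / 100 * (8 * L)) ≤ 2 ^ T.card := by
      have h3 : Real.exp (1 / 2) ≤ 2 := by
        have h4 : Real.exp (1 / 2) * Real.exp (1 / 2) = Real.exp 1 := by
          rw [← Real.exp_add]; norm_num
        have h5 := Real.exp_one_lt_d9
        nlinarith [Real.exp_pos (1 / 2 : ℝ)]
      calc Real.exp (δ / 100 * (8 * L)) ≤ Real.exp (T.card * (1 / 2)) := by
            apply Real.exp_le_exp.2
            nlinarith [mul_pos hδ (lt_of_lt_of_le one_pos hLr)]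
        _ = Real.exp (1 / 2) ^ T.card := by rw [Real.exp_nat_mul]
        _ ≤ _ := by gcongr
    have h3 : 0.49 * Real.exp (δ / 100 * (8 * L)) ≤
        C * Real.exp (δ / 100 * (6 * L) + δ / 100 * L) := by
      refine le_trans ?_ hJen
      gcongr
    have h4 : Real.exp (δ / 100 * (6 * L) + δ / 100 * L) =
        Real.exp (-(δ / 100 * L)) * Real.exp (δ / 100 * (8 * L)) := by
      rw [← Real.exp_add]; congr 1; ring
    rw [h4, ← mul_assoc C] at h3
    exact le_of_mul_le_mul_right h3 (Real.exp_pos _)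
  have hlim : Tendsto (fun L : ℕ => C * Real.exp (-(δ / 100 * L))) atTop (nhds (C * 0)) := by
    refine Tendsto.const_mul C (Real.tendsto_exp_neg_atTop_nhds_zero.comp ?_)
    exact tendsto_natCast_atTop_atTop.const_mul_atTop (by positivity)
  have := ge_of_tendsto hlim hmain
  norm_num at this
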